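/- Let N ≥ 3, 1 < p < N, p* = Np/(N−p), and let Ω ⊂ ℝᴺ be a measurable set of finite Lebesgue measure. Let f : ℝ → ℝ be continuous with f(u) = o(|u|^{p*−1}) as |u| → ∞, and let F(u) = ∫₀ᵘ f(s) ds. Let (vₙ) be a sequence of measurable functions on Ω such that sup_n ∫_Ω |vₙ|^{p*} dx < ∞ and ∫_Ω |vₙ| dx → 0. Then ∫_Ω F(vₙ(x)) dx → 0 as n → ∞. -/

import Mathlib

/-!
Subcritical growth and continuity give, for each `ε > 0`, a constant `C` with
`|f u| ≤ ε |u|^(p* - 1) + C` on the whole line, hence `|F u| ≤ ε |u|^p* + C |u|`. Therefore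
`∫_Ω |F(vₙ)| ≤ ε M + C ‖vₙ‖_{L¹}`, where `M` bounds `∫_Ω |vₙ|^p*`. Letting first `n → ∞` and then
`ε → 0` shows that `F(vₙ) → 0` in `L¹(Ω)`.
-/

open Filter MeasureTheory intervalIntegral

open Asymptotics Topology
open scoped ENNReal NNReal

section Growth

lemma isLittleO_abs_rpow_of_tendsto_div {f : ℝ → ℝ} {q : ℝ}
    (h : Tendsto (fun u ↦ f u / |u| ^ q) (cocompact ℝ) (𝓝 0)) :
    f =o[cocompact ℝ] fun u ↦ |u| ^ q := by
  refine isLittleO_of_tendsto' ?_ h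
  filter_upwards [(isCompact_singleton (x := (0 : ℝ))).compl_mem_cocompact] with u hu h_zero
  exact absurd h_zero (Real.rpow_pos_of_pos (abs_pos.2 hu) q).ne'

lemma exists_norm_le_mul_add_of_isLittleO_cocompact {X E G : Type*}
    [TopologicalSpace X] [SeminormedAddCommGroup E] [SeminormedAddCommGroup G] {f : X → E}
    {g : X → G} (hf : Continuous f) (hfg : f =o[cocompact X] g) {ε : ℝ≥0} (hε : 0 < ε) :
    ∃ C : ℝ≥0, ∀ x, ‖f x‖ ≤ ε * ‖g x‖ + C := by
  obtain ⟨K, hK, hK_compl⟩ := mem_cocompact.1 (hfg.bound (NNReal.coe_pos.2 hε))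
  obtain ⟨C, hC⟩ := hK.exists_bound_of_continuousOn hf.continuousOn
  refine ⟨C.toNNReal, fun x ↦ ?_⟩
  by_cases hx : x ∈ K
  · calc ‖f x‖ ≤ C := hC x hx
      _ ≤ C.toNNReal := Real.le_coe_toNNReal C
      _ ≤ ε * ‖g x‖ + C.toNNReal := le_add_of_nonneg_left (by positivity)
  · calc ‖f x‖ ≤ ε * ‖g x‖ := hK_compl hx
      _ ≤ ε * ‖g x‖ + C.toNNReal := le_add_of_nonneg_right NNReal.zero_le_coe

lemma norm_integral_le_mul_rpow_add {E : Type*} [NormedAddCommGroup E] [NormedSpace ℝ E] {f : ℝ → E}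
    {r : ℝ} {ε C : ℝ≥0} (hr : 1 ≤ r) (h : ∀ s, ‖f s‖ ≤ ε * |s| ^ (r - 1) + C) (u : ℝ) :
    ‖∫ s in (0 : ℝ)..u, f s‖ ≤ ε * |u| ^ r + C * |u| := by
  have h_le (s : ℝ) (hs : s ∈ Set.uIoc 0 u) : ‖f s‖ ≤ ε * |u| ^ (r - 1) + C := by
    have hsu : |s| ≤ |u| := by
      simpa using Set.abs_sub_left_of_mem_uIcc (Set.uIoc_subset_uIcc hs)
    calc ‖f s‖ ≤ ε * |s| ^ (r - 1) + C := h s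
      _ ≤ ε * |u| ^ (r - 1) + C := by gcongr
  have h_rpow : |u| ^ (r - 1) * |u| = |u| ^ r := by
    rw [← Real.rpow_add_one' (abs_nonneg u) (by linarith), sub_add_cancel]
  calc ‖∫ s in (0 : ℝ)..u, f s‖
      ≤ (ε * |u| ^ (r - 1) + C) * |u - 0| := norm_integral_le_of_norm_le_const h_le
    _ = ε * |u| ^ r + C * |u| := by rw [sub_zero, add_mul, mul_assoc, h_rpow]

end Growth

section Vanishing

variable {α ι E : Type*} [MeasurableSpace α] {μ : Measure α} {l : Filter ι}

lemma lintegral_enorm_le_of_norm_le_mul_add [SeminormedAddCommGroup E] {g : α → E} {φ ψ : α → ℝ}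
    {ε C : ℝ≥0} (hψ : AEMeasurable ψ μ) (h : ∀ᵐ x ∂μ, ‖g x‖ ≤ ε * φ x + C * ψ x) :
    ∫⁻ x, ‖g x‖ₑ ∂μ ≤
      ε * ∫⁻ x, ENNReal.ofReal (φ x) ∂μ + C * ∫⁻ x, ENNReal.ofReal (ψ x) ∂μ := by
  have h_enorm : ∀ᵐ x ∂μ,
      ‖g x‖ₑ ≤ ε * ENNReal.ofReal (φ x) + C * ENNReal.ofReal (ψ x) := by
    filter_upwards [h] with x hx
    calc ‖g x‖ₑ = ENNReal.ofReal ‖g x‖ := (ofReal_norm _).symm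
      _ ≤ ENNReal.ofReal (ε * φ x) + ENNReal.ofReal (C * ψ x) :=
        (ENNReal.ofReal_le_ofReal hx).trans ENNReal.ofReal_add_le
      _ = ε * ENNReal.ofReal (φ x) + C * ENNReal.ofReal (ψ x) := by
        simp only [ENNReal.ofReal_mul NNReal.zero_le_coe, ENNReal.ofReal_coe_nnreal]
  refine (lintegral_mono_ae h_enorm).trans_eq ?_
  rw [lintegral_add_right' _ (hψ.ennreal_ofReal.const_mul _),
    lintegral_const_mul' _ _ ENNReal.coe_ne_top, lintegral_const_mul' _ _ ENNReal.coe_ne_top]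

lemma tendsto_zero_of_le_mul_add {a b : ι → ℝ≥0∞} {M : ℝ≥0} (hb : Tendsto b l (𝓝 0))
    (h : ∀ ε : ℝ≥0, 0 < ε → ∃ C : ℝ≥0, ∀ᶠ i in l, a i ≤ ε * M + C * b i) :
    Tendsto a l (𝓝 0) := by
  refine ENNReal.tendsto_nhds_zero.2 fun η hη ↦ ?_
  obtain ⟨ε, hε, hεη⟩ := ENNReal.exists_nnreal_pos_mul_lt (ENNReal.coe_ne_top (r := M)) hη.ne'
  obtain ⟨C, hC⟩ := h ε hε
  have h_lim : Tendsto (fun i ↦ ε * M + C * b i) l (𝓝 (ε * M)) := by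
    simpa using (ENNReal.Tendsto.const_mul hb (Or.inr ENNReal.coe_ne_top)).const_add (ε * M : ℝ≥0∞)
  filter_upwards [hC, h_lim.eventually_le_const hεη] with i hi hi_η
  exact hi.trans hi_η

lemma tendsto_integral_zero_of_tendsto_lintegral_enorm [NormedAddCommGroup E] [NormedSpace ℝ E]
    {g : ι → α → E} (h : Tendsto (fun i ↦ ∫⁻ x, ‖g i x‖ₑ ∂μ) l (𝓝 0)) :
    Tendsto (fun i ↦ ∫ x, g i x ∂μ) l (𝓝 0) := by
  rw [tendsto_zero_iff_enorm_tendsto_zero]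
  exact tendsto_of_tendsto_of_tendsto_of_le_of_le tendsto_const_nhds h (fun _ ↦ zero_le)
    fun i ↦ enorm_integral_le_lintegral_enorm (g i)

theorem primitive_term_vanishes_general {r : ℝ} (hr : 1 ≤ r) {f F : ℝ → ℝ} (hf : Continuous f)
    (hgrowth : f =o[cocompact ℝ] fun u ↦ |u| ^ (r - 1)) (hF : ∀ u, F u = ∫ s in (0 : ℝ)..u, f s)
    {v : ι → α → ℝ} (hmeas : ∀ i, AEMeasurable (v i) μ)
    (hbound : ∃ M : ℝ≥0, ∀ᶠ i in l, ∫⁻ x, ENNReal.ofReal (|v i x| ^ r) ∂μ ≤ M)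
    (hL1 : Tendsto (fun i ↦ ∫⁻ x, ENNReal.ofReal |v i x| ∂μ) l (𝓝 0)) :
    Tendsto (fun i ↦ ∫⁻ x, ‖F (v i x)‖ₑ ∂μ) l (𝓝 0) := by
  obtain ⟨M, hM⟩ := hbound
  refine tendsto_zero_of_le_mul_add (M := M) hL1 fun ε hε ↦ ?_
  obtain ⟨C, hC⟩ := exists_norm_le_mul_add_of_isLittleO_cocompact hf hgrowth hε
  have hf_le (s : ℝ) : ‖f s‖ ≤ ε * |s| ^ (r - 1) + C := by
    simpa only [Real.norm_of_nonneg (Real.rpow_nonneg (abs_nonneg s) _)] using hC s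
  have hF_le (u : ℝ) : ‖F u‖ ≤ ε * |u| ^ r + C * |u| := by
    simpa only [hF] using norm_integral_le_mul_rpow_add hr hf_le u
  refine ⟨C, hM.mono fun i hi ↦ ?_⟩
  calc ∫⁻ x, ‖F (v i x)‖ₑ ∂μ
      ≤ ε * ∫⁻ x, ENNReal.ofReal (|v i x| ^ r) ∂μ + C * ∫⁻ x, ENNReal.ofReal |v i x| ∂μ :=
        lintegral_enorm_le_of_norm_le_mul_add (hmeas i).abs (.of_forall fun x ↦ hF_le (v i x))
    _ ≤ ε * M + C * ∫⁻ x, ENNReal.ofReal |v i x| ∂μ := by gcongr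

end Vanishing

lemma one_le_mul_div_sub {d p : ℝ} (hp : 1 ≤ p) (hpd : p < d) : 1 ≤ d * p / (d - p) := by
  rw [one_le_div (sub_pos.2 hpd)]
  nlinarith

/-- if `f(u) = o(|u|^{p*-1})` as `|u| → ∞`, `F(u) = ∫₀ᵘ f(s) ds`, `Ω` has
finite measure, `(vₙ)` is bounded in `L^{p*}(Ω)` and `vₙ → 0` in `L¹(Ω)`, then `∫_Ω F(vₙ) → 0`. -/
theorem primitive_term_vanishes (N : ℕ) (hN : 3 ≤ N) (p ps : ℝ) (hp1 : 1 < p) (hpN : p < N)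
    (hps : ps = N * p / (N - p))
    (Ω : Set (EuclideanSpace ℝ (Fin N))) (hΩ : MeasurableSet Ω) (hΩfin : volume Ω < ⊤)
    (f : ℝ → ℝ) (hf : Continuous f)
    (hgrowth : Tendsto (fun u : ℝ => f u / |u| ^ (ps - 1)) (cocompact ℝ) (nhds 0))
    (F : ℝ → ℝ) (hF : ∀ u : ℝ, F u = ∫ s in (0:ℝ)..u, f s)
    (v : ℕ → EuclideanSpace ℝ (Fin N) → ℝ) (hmeas : ∀ n, Measurable (v n))
    (hbound : ∃ M : ℝ, ∀ n, (∫⁻ x in Ω, ENNReal.ofReal (|v n x| ^ ps)) ≤ ENNReal.ofReal M)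
    (hL1 : Tendsto (fun n => ∫⁻ x in Ω, ENNReal.ofReal |v n x|) atTop (nhds 0)) :
    Tendsto (fun n => ∫ x in Ω, F (v n x)) atTop (nhds 0) := by
  obtain ⟨M, hM⟩ := hbound
  exact tendsto_integral_zero_of_tendsto_lintegral_enorm <| primitive_term_vanishes_general
    (hps ▸ one_le_mul_div_sub hp1.le hpN) hf (isLittleO_abs_rpow_of_tendsto_div hgrowth) hF
    (fun n ↦ (hmeas n).aemeasurable) ⟨M.toNNReal, .of_forall hM⟩ hL1
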